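/- arXiv:1209.2883 — 2 statements merged into one kernel-verified Lean document; each statement's English description precedes it below -/
import Mathlib

section
/- Let Y be a finite set, let f and g be pmfs on Y, and suppose there exists y' ∈ Y with f(y') > 0 and g(y') = 0. For λ ∈ [0,1] define f_λ = λg + (1-λ)f. Then the derivative with respect to λ of H(f_λ) tends to -∞ as λ → 1 from the left; in particular, there exists λ̃ ∈ [0,1) such that (d/dλ) H(f_λ) < 0 for all λ ∈ (λ̃, 1). -/
/-- Let `f`, `g` be pmfs on a finite set `Y` and `y'` a point with `f y' > 0`
and `g y' = 0`. For `l ∈ [0,1]` let `f_l = l • g + (1-l) • f`. Then the derivative (in `l`)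
of the entropy `H(f_l)` tends to `-∞` as `l → 1⁻`; in particular there is `lt ∈ [0,1)` such
that the derivative is negative on `(lt, 1)`. -/
theorem deriv_entropy_tendsto_atBot {Y : Type*} [Fintype Y]
    (f g : Y → ℝ)
    (hf0 : ∀ y, 0 ≤ f y) (hf1 : ∑ y, f y = 1)
    (hg0 : ∀ y, 0 ≤ g y) (hg1 : ∑ y, g y = 1)
    (y' : Y) (hfy' : 0 < f y') (hgy' : g y' = 0) :
    Filter.Tendsto
      (deriv fun l : ℝ =>
        -∑ y, (l * g y + (1 - l) * f y) * Real.log (l * g y + (1 - l) * f y))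
      (nhdsWithin 1 (Set.Iio 1)) Filter.atBot ∧
    ∃ lt : ℝ, 0 ≤ lt ∧ lt < 1 ∧ ∀ l : ℝ, lt < l → l < 1 →
      deriv (fun l : ℝ =>
        -∑ y, (l * g y + (1 - l) * f y) * Real.log (l * g y + (1 - l) * f y)) l < 0 := by
  classical
  have hIoo : ∀ᶠ l : ℝ in nhdsWithin 1 (Set.Iio 1), 0 < l ∧ l < 1 := by
    have h : Set.Ioo (0:ℝ) 1 ∈ nhdsWithin (1:ℝ) (Set.Iio 1) :=
      Ioo_mem_nhdsLT (by norm_num)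
    filter_upwards [h] with l hl using hl
  -- the summands of minus the derivative
  set t : Y → ℝ → ℝ := fun y l =>
    (g y - f y) * (Real.log (l * g y + (1 - l) * f y) + 1) with ht
  have hD : ∀ l : ℝ, 0 < l → l < 1 →
      HasDerivAt (fun l : ℝ =>
        -∑ y, (l * g y + (1 - l) * f y) * Real.log (l * g y + (1 - l) * f y))
        (-∑ y, t y l) l := by
    intro l h0 h1
    refine HasDerivAt.neg (HasDerivAt.fun_sum fun y _ => ?_)
    by_cases hz : g y = 0 ∧ f y = 0
    · simp only [ht, hz.1, hz.2]
      simpa using hasDerivAt_const l (0:ℝ)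
    · have hp : l * g y + (1 - l) * f y ≠ 0 := by
        intro h
        have h2 : 0 ≤ l * g y := mul_nonneg h0.le (hg0 y)
        have h3 : 0 ≤ (1 - l) * f y := mul_nonneg (by linarith) (hf0 y)
        apply hz
        constructor
        · have : l * g y = 0 := by linarith
          rcases mul_eq_zero.1 this with h | h
          · linarith
          · exact h
        · have : (1 - l) * f y = 0 := by linarith
          rcases mul_eq_zero.1 this with h | h
          · linarith
          · exact h
      have hin : HasDerivAt (fun l : ℝ => l * g y + (1 - l) * f y) (g y - f y) l := by
        have := ((hasDerivAt_id l).mul_const (g y)).add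
          (((hasDerivAt_id l).const_sub 1).mul_const (f y))
        refine HasDerivAt.congr_deriv this ?_
        ring
      have := (Real.hasDerivAt_mul_log hp).comp l hin
      refine HasDerivAt.congr_deriv this ?_
      simp only [ht]
      ring
  have hinf : ∀ y, 0 < f y → g y = 0 →
      Filter.Tendsto (t y) (nhdsWithin 1 (Set.Iio 1)) Filter.atTop := by
    intro y hfy hgy
    have h1 : Filter.Tendsto (fun l : ℝ => l * g y + (1 - l) * f y)
        (nhdsWithin 1 (Set.Iio 1)) (nhdsWithin 0 (Set.Ioi 0)) := by
      refine tendsto_nhdsWithin_iff.2 ⟨?_, ?_⟩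
      · have : Continuous (fun l : ℝ => l * g y + (1 - l) * f y) := by fun_prop
        have h := this.tendsto 1
        simp only [hgy] at h ⊢
        norm_num at h ⊢
        exact h.mono_left nhdsWithin_le_nhds
      · filter_upwards [hIoo] with l hl
        have : 0 < (1 - l) * f y := mul_pos (by linarith [hl.2]) hfy
        simpa [hgy] using this
    have h2 := Filter.tendsto_atBot_add_const_right _ (1:ℝ)
      (Real.tendsto_log_nhdsGT_zero.comp h1)
    exact h2.const_mul_atBot_of_neg (by linarith)
  have hbdd : ∀ y, ∃ C : ℝ, ∀ᶠ l in nhdsWithin 1 (Set.Iio 1), C ≤ t y l := by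
    intro y
    rcases (hg0 y).eq_or_lt with hgy | hgy
    · rcases (hf0 y).eq_or_lt with hfy | hfy
      · exact ⟨0, by simp [ht, ← hgy, ← hfy]⟩
      · exact ⟨0, (hinf y hfy hgy.symm).eventually_ge_atTop 0⟩
    · have hc : ContinuousAt (t y) 1 := by
        simp only [ht]
        refine ContinuousAt.mul continuousAt_const (ContinuousAt.add ?_ continuousAt_const)
        refine ContinuousAt.log (by fun_prop) ?_
        simpa using hgy.ne'
      refine ⟨t y 1 - 1, ?_⟩
      have h : Filter.Tendsto (t y) (nhdsWithin 1 (Set.Iio 1)) (nhds (t y 1)) :=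
        hc.tendsto.mono_left nhdsWithin_le_nhds
      filter_upwards [h.eventually (lt_mem_nhds (show t y 1 - 1 < t y 1 by linarith))]
        with l hl using hl.le
  choose C hC using hbdd
  have hsum : Filter.Tendsto (fun l => ∑ y, t y l) (nhdsWithin 1 (Set.Iio 1))
      Filter.atTop := by
    have h1 : ∀ᶠ l in nhdsWithin 1 (Set.Iio 1), ∀ y, C y ≤ t y l :=
      Filter.eventually_all.2 hC
    have h2 := Filter.tendsto_atTop_add_const_right _ (∑ y ∈ Finset.univ.erase y', C y)
      (hinf y' hfy' hgy')
    refine Filter.tendsto_atTop_mono' _ ?_ h2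
    filter_upwards [h1] with l hl
    rw [← Finset.add_sum_erase Finset.univ (fun y => t y l) (Finset.mem_univ y')]
    have := Finset.sum_le_sum (s := Finset.univ.erase y') (fun y _ => hl y)
    linarith
  have main : Filter.Tendsto
      (deriv fun l : ℝ =>
        -∑ y, (l * g y + (1 - l) * f y) * Real.log (l * g y + (1 - l) * f y))
      (nhdsWithin 1 (Set.Iio 1)) Filter.atBot := by
    refine (Filter.tendsto_neg_atTop_atBot.comp hsum).congr' ?_
    filter_upwards [hIoo] with l hl
    exact (hD l hl.1 hl.2).deriv.symm
  refine ⟨main, ?_⟩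
  have hneg := main.eventually_lt_atBot 0
  obtain ⟨a, ha, hsub⟩ := (mem_nhdsLT_iff_exists_Ioo_subset (a := (1:ℝ))).1 hneg
  refine ⟨max a 0, le_max_right _ _, max_lt ha one_pos, fun l hl hl1 => ?_⟩
  exact hsub ⟨(le_max_left _ _).trans_lt hl, hl1⟩
end

section
/- Let X and U be finite nonempty sets, Q a transition kernel on X controlled by U, and f* a joint pmf on X × U satisfying the stationarity constraint Σ_{u⁺} f*(x⁺,u⁺) = Σ_{x,u} Q(x⁺,x,u) f*(x,u) for all x⁺ ∈ X. Let f*_X(x) = Σ_u f*(x,u), let G be any memoryless policy, and define the policy K*(u,x) = f*(x,u)/f*_X(x) if f*_X(x) > 0 and K*(u,x) = G(u,x) otherwise. Then f* satisfies the closed-loop invariance equation under K*: f*(x⁺,u⁺) = K*(u⁺,x⁺) · Σ_{x,u} Q(x⁺,x,u) f*(x,u) for all x⁺ ∈ X, u⁺ ∈ U. -/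
/-- If a joint pmf `fstar` satisfies the stationarity constraint, then it
satisfies the closed-loop invariance equation under the policy
`K*(u,x) = fstar(x,u) / fstar_X(x)` when `fstar_X(x) > 0`, and `K*(u,x) = G(u,x)` otherwise,
where `G` is any memoryless policy. -/
theorem closed_loop_invariance_of_stationarity {X U : Type*} [Fintype X] [Fintype U]
    [Nonempty X] [Nonempty U]
    (Q : X → X → U → ℝ)
    (hQ0 : ∀ x' x u, 0 ≤ Q x' x u)
    (hQ1 : ∀ x u, ∑ x', Q x' x u = 1)
    (fstar : X → U → ℝ)
    (hfstar0 : ∀ x u, 0 ≤ fstar x u)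
    (hfstar1 : ∑ x, ∑ u, fstar x u = 1)
    (hstat : ∀ x' : X, ∑ u', fstar x' u' = ∑ x, ∑ u, Q x' x u * fstar x u)
    (G : U → X → ℝ)
    (hG0 : ∀ u x, 0 ≤ G u x)
    (hG1 : ∀ x, ∑ u, G u x = 1) :
    ∀ x' u', fstar x' u' =
      (if 0 < ∑ u, fstar x' u then fstar x' u' / ∑ u, fstar x' u else G u' x') *
        ∑ x, ∑ u, Q x' x u * fstar x u := by
  intro x' u'
  rw [← hstat x']
  split_ifs with h
  · exact (div_mul_cancel₀ _ h.ne').symm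
  · have h1 : fstar x' u' ≤ ∑ u, fstar x' u :=
      Finset.single_le_sum (fun u _ => hfstar0 x' u) (Finset.mem_univ u')
    have h2 := hfstar0 x' u'
    have h3 : ∑ u, fstar x' u = 0 := by linarith
    rw [h3, mul_zero]
    linarith
end
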